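/- arXiv:2504.17245 — 2 statements merged into one kernel-verified Lean document; each statement's English description precedes it below -/
import Mathlib

section
/- Fix ε ∈ {1, −1}. Define, in F = ℚ(u, t), for integers 0 ≤ i ≤ j: m_{ij} = ε^{(j−i)/2} t^{−i} u^{−j(j+1)/2 + (j−i)^2/4} (∏_{k=i+1}^{j}(u^{k} − 1)) / (∏_{k=1}^{(j−i)/2}(u^{2k} − 1)) if j − i is even, and m_{ij} = 0 if j − i is odd. Define b_{ij} = (−ε)^{(j−i)/2} u^{(j−i)/2} t^{j−i} (∏_{k=i+1}^{j}(u^{k} − 1)) / (∏_{k=1}^{(j−i)/2}(1 − u^{2i+1+2k} t^{2})(u^{2k} − 1)) when 0 ≤ i ≤ j and j − i is even, and b_{ij} = 0 otherwise (in particular when i > j or j − i is odd). Then b_{ii} = 1 for every i ≥ 0, and for all integers 0 ≤ i < j one has b_{ij} = (t^{j} u^{j(j+1)/2} / (u^{(j−i)(j+i+1)/2} t^{j−i} − 1)) · ∑_{k=i}^{j−1} m_{kj} b_{ik}. (This says the displayed closed formulas solve the defining recursion of the coefficients b_{χ_p}(s)_{ij} of the U(p)-eigenfunction decomposition of Siegel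 Eisenstein series for the quadratic character, under the substitution u = p, t = p^{−s}, ε = χ_p(−1).) -/
/-- `F = ℚ(u, t)`, the field of rational functions in two independent
indeterminates over `ℚ`; `u` stands for the odd prime `p` and `t` for `p^{−s}`. -/
noncomputable abbrev Fut : Type := FractionRing (MvPolynomial (Fin 2) ℚ)

/-- The indeterminate `u` viewed inside `Fut`. -/
noncomputable def U : Fut := algebraMap (MvPolynomial (Fin 2) ℚ) Fut (MvPolynomial.X 0)

/-- The indeterminate `t` viewed inside `Fut`. -/
noncomputable def T : Fut := algebraMap (MvPolynomial (Fin 2) ℚ) Fut (MvPolynomial.X 1)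

/-!
Fix `i` and put `q = u²`, `y = u^(2i+3) t²`. For `j = i + 2n` the recursion is equivalent to
`∑_{k=i}^{j} m_{kj} b_{ik} = m_{ii} b_{ij}`: the rows of `b` are left eigenvectors of the
triangular matrix `m`. After dividing by `m_{jj}` and cancelling the factors common to all terms,
this becomes the terminating `q`-series identity
`∑_{l+d=n} (-1)^d q^(d choose 2) (y q^l; q)_d / ((q; q)_l (q; q)_d) = y^n q^(n(n-1)) / (q; q)_n`.
Its left side `S_n(y)` satisfies `(1 - q^(n+1)) S_{n+1}(y) = y q^n S_n(y q)`, which follows from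
splitting `1 - q^(l+d) = (1 - q^d) + q^d (1 - q^l)` in each term.
-/

open Finset

lemma prod_Icc_one_eq_prod_range {M : Type*} [CommMonoid M] (f : ℕ → M) (n : ℕ) :
    ∏ k ∈ Icc 1 n, f k = ∏ k ∈ range n, f (k + 1) := by
  rw [range_eq_Ico, prod_Ico_add', zero_add, Ico_add_one_right_eq_Icc]

lemma prod_Icc_mul_prod_Icc {M : Type*} [CommMonoid M] (f : ℕ → M) {i k j : ℕ} (hik : i ≤ k)
    (hkj : k ≤ j) :
    (∏ r ∈ Icc (i + 1) k, f r) * ∏ r ∈ Icc (k + 1) j, f r = ∏ r ∈ Icc (i + 1) j, f r := by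
  simpa only [Icc_add_one_left_eq_Ioc] using prod_Ioc_consecutive f hik hkj

lemma sum_Ico_add_two_mul {M : Type*} [AddCommMonoid M] (f : ℕ → M) (i n : ℕ)
    (hf : ∀ l, f (i + 2 * l + 1) = 0) :
    ∑ k ∈ Ico i (i + 2 * n), f k = ∑ l ∈ range n, f (i + 2 * l) := by
  induction n with
  | zero => simp
  | succ n ih =>
    rw [sum_range_succ, ← ih, mul_add_one, ← add_assoc, sum_Ico_succ_top (by lia),
      sum_Ico_succ_top (by lia), hf, add_zero]

lemma sq_eq_add_two_mul_choose_two (n : ℕ) : n ^ 2 = n + 2 * n.choose 2 := by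
  induction n with
  | zero => rfl
  | succ n ih =>
    rw [Nat.choose_succ_succ' n 1, Nat.choose_one_right]
    linarith

lemma pow_succ_ne_one {M : Type*} [Monoid M] {x : M} (hx : ¬IsOfFinOrder x) (k : ℕ) :
    x ^ (k + 1) ≠ 1 :=
  fun h => hx (isOfFinOrder_iff_pow_eq_one.2 ⟨k + 1, k.succ_pos, h⟩)

section QPochhammer

/-- The finite `q`-Pochhammer symbol `(a; q)_n = ∏_{k < n} (1 - a q^k)`. -/
def qPochhammer {R : Type*} [CommRing R] (a q : R) (n : ℕ) : R :=
  ∏ k ∈ range n, (1 - a * q ^ k)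

variable {R : Type*} [CommRing R] (a q : R)

lemma qPochhammer_zero : qPochhammer a q 0 = 1 :=
  prod_range_zero _

lemma qPochhammer_succ (n : ℕ) :
    qPochhammer a q (n + 1) = qPochhammer a q n * (1 - a * q ^ n) :=
  prod_range_succ _ _

lemma qPochhammer_add (l d : ℕ) :
    qPochhammer a q (l + d) = qPochhammer a q l * qPochhammer (a * q ^ l) q d := by
  simp only [qPochhammer, prod_range_add, pow_add, mul_assoc]

lemma qPochhammer_succ_left (n : ℕ) :
    qPochhammer a q (n + 1) = (1 - a) * qPochhammer (a * q) q n := by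
  rw [add_comm, qPochhammer_add, qPochhammer_succ, qPochhammer_zero, pow_zero, pow_one, one_mul,
    mul_one]

variable {a q}

lemma qPochhammer_ne_zero [IsDomain R] (h : ∀ k, a * q ^ k ≠ 1) (n : ℕ) :
    qPochhammer a q n ≠ 0 :=
  prod_ne_zero_iff.2 fun k _ => sub_ne_zero.2 (h k).symm

lemma qPochhammer_self_ne_zero [IsDomain R] (hq : ¬IsOfFinOrder q) (n : ℕ) :
    qPochhammer q q n ≠ 0 :=
  qPochhammer_ne_zero (fun k => pow_succ' q k ▸ pow_succ_ne_one hq k) n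

lemma prod_Icc_pow_two_mul_sub_one (u : R) (n : ℕ) :
    ∏ k ∈ Icc 1 n, (u ^ (2 * k) - 1) = (-1) ^ n * qPochhammer (u ^ 2) (u ^ 2) n := by
  rw [prod_Icc_one_eq_prod_range, qPochhammer, ← card_range n, ← prod_const, card_range,
    ← prod_mul_distrib]
  exact prod_congr rfl fun k _ => by ring

lemma prod_Icc_one_sub_pow_mul_sq (u t : R) (i n : ℕ) :
    ∏ k ∈ Icc 1 n, (1 - u ^ (2 * i + 1 + 2 * k) * t ^ 2) =
      qPochhammer (u ^ (2 * i + 3) * t ^ 2) (u ^ 2) n := by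
  rw [prod_Icc_one_eq_prod_range, qPochhammer]
  exact prod_congr rfl fun k _ => by ring

end QPochhammer

section QVandermonde

variable {K : Type*} [Field K]

/-- The `(l, d)` term of the `q`-Chu–Vandermonde sum
`(y; q)_n / (q; q)_n * ₂φ₁(q^(-n), 0; y; q, q)` with `n = l + d`, up to the factor
`(-1)^n q^(n choose 2)`. -/
def qVandermondeTerm (y q : K) (l d : ℕ) : K :=
  (-1) ^ d * q ^ d.choose 2 * qPochhammer (y * q ^ l) q d /
    (qPochhammer q q l * qPochhammer q q d)

lemma one_sub_mul_qVandermondeTerm_succ_right {q : K} (hq : ¬IsOfFinOrder q) (y : K)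
    (l d : ℕ) :
    (1 - q ^ (d + 1)) * qVandermondeTerm y q l (d + 1) =
      -q ^ d * (1 - y * q ^ l) * qVandermondeTerm (y * q) q l d := by
  have hd : 1 - q ^ (d + 1) ≠ 0 := sub_ne_zero.2 (pow_succ_ne_one hq d).symm
  have hQl := qPochhammer_self_ne_zero hq l
  have hQd := qPochhammer_self_ne_zero hq d
  rw [qVandermondeTerm, qVandermondeTerm, qPochhammer_succ_left, qPochhammer_succ,
    Nat.choose_succ_succ' d 1, Nat.choose_one_right, mul_right_comm y (q ^ l) q, ← pow_succ' q d]
  field_simp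
  ring

lemma one_sub_mul_qVandermondeTerm_succ_left {q : K} (hq : ¬IsOfFinOrder q) (y : K)
    (l d : ℕ) :
    (1 - q ^ (l + 1)) * qVandermondeTerm y q (l + 1) d = qVandermondeTerm (y * q) q l d := by
  have hl : 1 - q * q ^ l ≠ 0 := sub_ne_zero.2 (pow_succ' q l ▸ pow_succ_ne_one hq l).symm
  have hQl := qPochhammer_self_ne_zero hq l
  have hQd := qPochhammer_self_ne_zero hq d
  rw [qVandermondeTerm, qVandermondeTerm, qPochhammer_succ, pow_succ' q l, ← mul_assoc y]
  field_simp

lemma one_sub_mul_sum_qVandermondeTerm_succ {q : K} (hq : ¬IsOfFinOrder q) (y : K) (n : ℕ) :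
    (1 - q ^ (n + 1)) * ∑ p ∈ antidiagonal (n + 1), qVandermondeTerm y q p.1 p.2 =
      y * q ^ n * ∑ p ∈ antidiagonal n, qVandermondeTerm (y * q) q p.1 p.2 := by
  calc
    _ = ∑ p ∈ antidiagonal (n + 1), (1 - q ^ p.2) * qVandermondeTerm y q p.1 p.2 +
        ∑ p ∈ antidiagonal (n + 1), q ^ p.2 * ((1 - q ^ p.1) * qVandermondeTerm y q p.1 p.2) := by
      rw [mul_sum, ← sum_add_distrib]
      refine sum_congr rfl fun p hp => ?_
      rw [← mem_antidiagonal.1 hp]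
      ring
    _ = ∑ p ∈ antidiagonal n, (1 - q ^ (p.2 + 1)) * qVandermondeTerm y q p.1 (p.2 + 1) +
        ∑ p ∈ antidiagonal n,
          q ^ p.2 * ((1 - q ^ (p.1 + 1)) * qVandermondeTerm y q (p.1 + 1) p.2) := by
      rw [Nat.sum_antidiagonal_succ', Nat.sum_antidiagonal_succ]
      simp only [pow_zero, sub_self, zero_mul, mul_zero, zero_add]
    _ = _ := by
      rw [mul_sum, ← sum_add_distrib]
      refine sum_congr rfl fun p hp => ?_
      rw [one_sub_mul_qVandermondeTerm_succ_right hq, one_sub_mul_qVandermondeTerm_succ_left hq,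
        ← mem_antidiagonal.1 hp]
      ring

theorem sum_antidiagonal_qVandermondeTerm {q : K} (hq : ¬IsOfFinOrder q) (y : K) (n : ℕ) :
    ∑ p ∈ antidiagonal n, qVandermondeTerm y q p.1 p.2 =
      y ^ n * q ^ (2 * n.choose 2) / qPochhammer q q n := by
  induction n generalizing y with
  | zero => simp [qVandermondeTerm, qPochhammer_zero]
  | succ n ih =>
    have hn : 1 - q ^ (n + 1) ≠ 0 := sub_ne_zero.2 (pow_succ_ne_one hq n).symm
    have hQ := qPochhammer_self_ne_zero hq n
    rw [← mul_right_inj' hn, one_sub_mul_sum_qVandermondeTerm_succ hq, ih, qPochhammer_succ,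
      ← pow_succ', Nat.choose_succ_succ' n 1, Nat.choose_one_right]
    field_simp
    ring

end QVandermonde

section Coefficients

variable {K : Type*} [Field K] (ε u t : K)

/-- The quotient `m_{i,i+2d} / m_{i+2d,i+2d}`, with the denominator of `m` written as
`∏_{k=1}^{d} (u^{2k} - 1) = (-1)^d (u²; u²)_d`. -/
def mRatio (i d : ℕ) : K :=
  (-ε) ^ d * u ^ d ^ 2 * t ^ (2 * d) * (∏ k ∈ Icc (i + 1) (i + 2 * d), (u ^ k - 1)) /
    qPochhammer (u ^ 2) (u ^ 2) d

/-- The coefficient `b_{i,i+2n}`, with its denominator written in `q`-Pochhammer symbols for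
`q = u²`. -/
def bEven (i n : ℕ) : K :=
  ε ^ n * u ^ n * t ^ (2 * n) * (∏ k ∈ Icc (i + 1) (i + 2 * n), (u ^ k - 1)) /
    (qPochhammer (u ^ (2 * i + 3) * t ^ 2) (u ^ 2) n * qPochhammer (u ^ 2) (u ^ 2) n)

lemma mRatio_zero (i : ℕ) : mRatio ε u t i 0 = 1 := by
  simp [mRatio, qPochhammer_zero]

lemma bEven_zero (i : ℕ) : bEven ε u t i 0 = 1 := by
  simp [bEven, qPochhammer_zero]

lemma bEven_eq_prod_Icc (i n : ℕ) :
    bEven ε u t i n =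
      (-ε) ^ n * u ^ n * t ^ (2 * n) * (∏ k ∈ Icc (i + 1) (i + 2 * n), (u ^ k - 1)) /
        ∏ k ∈ Icc 1 n, ((1 - u ^ (2 * i + 1 + 2 * k) * t ^ 2) * (u ^ (2 * k) - 1)) := by
  have sign_ne_zero : (-1 : K) ^ n ≠ 0 := pow_ne_zero n (neg_ne_zero.2 one_ne_zero)
  rw [prod_mul_distrib, prod_Icc_one_sub_pow_mul_sq, prod_Icc_pow_two_mul_sub_one, neg_pow ε,
    bEven, mul_left_comm _ ((-1) ^ n)]
  simp only [mul_assoc]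
  exact (mul_div_mul_left _ _ sign_ne_zero).symm

variable {u t}

lemma mRatio_eq_mul_prod_Icc (hu : u ≠ 0) (ht : t ≠ 0) (i d N : ℕ) :
    mRatio ε u t i d =
      t ^ (i + 2 * d) * u ^ N *
        (ε ^ d * t ^ (-(i : ℤ)) * u ^ (((d ^ 2 : ℕ) : ℤ) - (N : ℤ)) *
          (∏ k ∈ Icc (i + 1) (i + 2 * d), (u ^ k - 1)) / ∏ k ∈ Icc 1 d, (u ^ (2 * k) - 1)) := by
  have sign_inv : ((-1 : K) ^ d)⁻¹ = (-1) ^ d := by rw [← inv_pow, inv_neg_one]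
  rw [prod_Icc_pow_two_mul_sub_one, mRatio, neg_pow ε, zpow_sub₀ hu, zpow_neg, zpow_natCast,
    zpow_natCast, zpow_natCast, div_eq_mul_inv _ (_ * _), mul_inv, sign_inv]
  field_simp
  ring

lemma mRatio_mul_bEven {i : ℕ} (hy : ∀ k, u ^ (2 * i + 3) * t ^ 2 * (u ^ 2) ^ k ≠ 1) (l d : ℕ) :
    mRatio ε u t (i + 2 * l) d * bEven ε u t i l =
      ε ^ (l + d) * u ^ (l + d) * t ^ (2 * (l + d)) *
          (∏ k ∈ Icc (i + 1) (i + 2 * (l + d)), (u ^ k - 1)) /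
          qPochhammer (u ^ (2 * i + 3) * t ^ 2) (u ^ 2) (l + d) *
        qVandermondeTerm (u ^ (2 * i + 3) * t ^ 2) (u ^ 2) l d := by
  have hY := qPochhammer_ne_zero hy (l + d)
  rw [qPochhammer_add] at hY
  have hYl := left_ne_zero_of_mul hY
  have hYd := right_ne_zero_of_mul hY
  rw [mRatio, bEven, qVandermondeTerm, qPochhammer_add, sq_eq_add_two_mul_choose_two d,
    ← prod_Icc_mul_prod_Icc _ (Nat.le_add_right i (2 * l)) (by lia : i + 2 * l ≤ i + 2 * (l + d)),
    show i + 2 * (l + d) = i + 2 * l + 2 * d by ring, neg_pow ε]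
  field_simp
  ring

theorem sum_antidiagonal_mRatio_mul_bEven (hu : ¬IsOfFinOrder u) {i : ℕ}
    (hy : ∀ k, u ^ (2 * i + 3) * t ^ 2 * (u ^ 2) ^ k ≠ 1) (n : ℕ) :
    ∑ p ∈ antidiagonal n, mRatio ε u t (i + 2 * p.1) p.2 * bEven ε u t i p.1 =
      u ^ (n * (2 * (i + n) + 1)) * t ^ (2 * n) * bEven ε u t i n := by
  have hq : ¬IsOfFinOrder (u ^ 2) := fun h => hu (h.of_pow two_ne_zero)
  have exponent : n * (2 * (i + n) + 1) = (2 * i + 3) * n + 2 * (2 * n.choose 2) := by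
    linarith [sq_eq_add_two_mul_choose_two n]
  set y := u ^ (2 * i + 3) * t ^ 2 with hy_def
  calc
    _ = ∑ p ∈ antidiagonal n,
        ε ^ n * u ^ n * t ^ (2 * n) * (∏ k ∈ Icc (i + 1) (i + 2 * n), (u ^ k - 1)) /
          qPochhammer y (u ^ 2) n * qVandermondeTerm y (u ^ 2) p.1 p.2 := by
      refine sum_congr rfl fun p hp => ?_
      rw [mRatio_mul_bEven ε hy, mem_antidiagonal.1 hp]
    _ = y ^ n * (u ^ 2) ^ (2 * n.choose 2) * bEven ε u t i n := by
      rw [← mul_sum, sum_antidiagonal_qVandermondeTerm hq, bEven, div_mul_div_comm,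
        mul_comm (_ * _), mul_div_assoc]
    _ = _ := by
      rw [hy_def, exponent]
      ring

lemma sum_range_mRatio_mul_bEven (hu : ¬IsOfFinOrder u) {i : ℕ}
    (hy : ∀ k, u ^ (2 * i + 3) * t ^ 2 * (u ^ 2) ^ k ≠ 1) (n : ℕ) :
    ∑ l ∈ range n, mRatio ε u t (i + 2 * l) (n - l) * bEven ε u t i l =
      (u ^ (n * (2 * (i + n) + 1)) * t ^ (2 * n) - 1) * bEven ε u t i n := by
  have eigen := sum_antidiagonal_mRatio_mul_bEven ε hu hy n
  rw [Nat.sum_antidiagonal_eq_sum_range_succ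
    (fun l d => mRatio ε u t (i + 2 * l) d * bEven ε u t i l), sum_range_succ, Nat.sub_self,
    mRatio_zero, one_mul] at eigen
  rw [sub_one_mul, ← eigen, add_sub_cancel_right]

theorem b_chip_solves_recursion_general (hu₀ : u ≠ 0) (ht₀ : t ≠ 0) (hu : ¬IsOfFinOrder u)
    (hut : ∀ i n : ℕ, 0 < n → u ^ (n * (2 * (i + n) + 1)) * t ^ (2 * n) ≠ 1) (m b : ℕ → ℕ → K)
    (hm_even : ∀ i j : ℕ, i ≤ j → (j - i) % 2 = 0 →
      m i j = ε ^ ((j - i) / 2) * t ^ (-(i : ℤ)) *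
        u ^ ((((j - i) ^ 2 / 4 : ℕ) : ℤ) - ((j * (j + 1) / 2 : ℕ) : ℤ)) *
        (∏ k ∈ Icc (i + 1) j, (u ^ k - 1)) /
        ∏ k ∈ Icc 1 ((j - i) / 2), (u ^ (2 * k) - 1))
    (hm_odd : ∀ i j : ℕ, i ≤ j → (j - i) % 2 = 1 → m i j = 0)
    (hb_even : ∀ i j : ℕ, i ≤ j → (j - i) % 2 = 0 →
      b i j = (-ε) ^ ((j - i) / 2) * u ^ ((j - i) / 2) * t ^ (j - i) *
        (∏ k ∈ Icc (i + 1) j, (u ^ k - 1)) /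
        ∏ k ∈ Icc 1 ((j - i) / 2),
          ((1 - u ^ (2 * i + 1 + 2 * k) * t ^ 2) * (u ^ (2 * k) - 1)))
    (hb_zero : ∀ i j : ℕ, ¬(i ≤ j ∧ (j - i) % 2 = 0) → b i j = 0) :
    (∀ i : ℕ, b i i = 1) ∧
    (∀ i j : ℕ, i < j →
      b i j =
        (t ^ j * u ^ (j * (j + 1) / 2) / (u ^ ((j - i) * (j + i + 1) / 2) * t ^ (j - i) - 1)) *
          ∑ k ∈ Ico i j, m k j * b i k) := by
  have hb (i n : ℕ) : b i (i + 2 * n) = bEven ε u t i n := by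
    rw [hb_even _ _ (by lia) (by lia), add_tsub_cancel_left, Nat.mul_div_cancel_left n two_pos,
      ← bEven_eq_prod_Icc]
  have hm (i d : ℕ) : t ^ (i + 2 * d) * u ^ ((i + 2 * d) * (i + 2 * d + 1) / 2) *
      m i (i + 2 * d) = mRatio ε u t i d := by
    rw [hm_even _ _ (by lia) (by lia), add_tsub_cancel_left, Nat.mul_div_cancel_left d two_pos,
      mul_pow 2 d, show 2 ^ 2 = 4 from rfl, Nat.mul_div_cancel_left _ four_pos,
      ← mRatio_eq_mul_prod_Icc ε hu₀ ht₀]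
  refine ⟨fun i => (hb i 0).trans (bEven_zero ε u t i), fun i j hij => ?_⟩
  obtain ⟨n, hn | hn⟩ := Nat.even_or_odd' (j - i)
  · obtain rfl : j = i + 2 * n := by lia
    have hy (k : ℕ) : u ^ (2 * i + 3) * t ^ 2 * (u ^ 2) ^ k ≠ 1 := by
      convert hut (i + k) 1 one_pos using 1
      ring
    have exponent : 2 * n * (i + 2 * n + i + 1) / 2 = n * (2 * (i + n) + 1) := by
      rw [mul_assoc, Nat.mul_div_cancel_left _ two_pos]
      ring
    rw [hn, exponent, hb, div_mul_eq_mul_div, eq_div_iff (sub_ne_zero.2 (hut i n (by lia))),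
      mul_comm, ← sum_range_mRatio_mul_bEven ε hu hy,
      sum_Ico_add_two_mul _ _ _ fun l => by rw [hb_zero i _ (by lia), mul_zero], mul_sum]
    refine sum_congr rfl fun l hl => ?_
    have hj : i + 2 * n = i + 2 * l + 2 * (n - l) := by have := mem_range.1 hl; lia
    rw [← hm, ← hj, hb, mul_assoc]
  · rw [hb_zero i j (by lia), sum_eq_zero, mul_zero]
    intro k hk
    obtain ⟨hik, hkj⟩ := mem_Ico.1 hk
    obtain hodd | hodd : (j - k) % 2 = 1 ∨ ¬(i ≤ k ∧ (k - i) % 2 = 0) := by lia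
    · rw [hm_odd k j hkj.le hodd, zero_mul]
    · rw [hb_zero i k hodd, mul_zero]

end Coefficients

lemma U_ne_zero : U ≠ 0 := by
  simp [U]

lemma T_ne_zero : T ≠ 0 := by
  simp [T]

lemma U_pow_mul_T_pow_ne_one {a b : ℕ} (h : a ≠ 0) : U ^ a * T ^ b ≠ 1 := by
  intro heq
  simp only [U, T, ← map_pow, ← map_mul] at heq
  have hpoly := IsFractionRing.injective (MvPolynomial (Fin 2) ℚ) Fut (heq.trans (map_one _).symm)
  have heval := congrArg (MvPolynomial.eval fun _ => (2 : ℚ)) hpoly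
  simp only [map_mul, map_pow, MvPolynomial.eval_X, map_one, ← pow_add] at heval
  exact (one_lt_pow₀ one_lt_two (by lia)).ne' heval

lemma not_isOfFinOrder_U : ¬IsOfFinOrder U := by
  intro h
  obtain ⟨n, hn, hUn⟩ := isOfFinOrder_iff_pow_eq_one.1 h
  exact U_pow_mul_T_pow_ne_one (b := 0) hn.ne' (by rw [hUn, pow_zero, one_mul])

/-- The closed formulas for `b_{χ_p}(s)_{ij}` solve the defining recursion of the
coefficients of the `U(p)`-eigenfunction decomposition of Siegel Eisenstein series
for the quadratic character (under `u = p`, `t = p^{−s}`, `ε = χ_p(−1)`). -/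
theorem b_chip_solves_recursion (ε : Fut) (hε : ε = 1 ∨ ε = -1) (m b : ℕ → ℕ → Fut)
    -- m_{ij} for i ≤ j with j − i even
    (hm_even : ∀ i j : ℕ, i ≤ j → (j - i) % 2 = 0 →
      m i j = ε ^ ((j - i) / 2) * T ^ (-(i : ℤ)) *
        U ^ ((((j - i) ^ 2 / 4 : ℕ) : ℤ) - ((j * (j + 1) / 2 : ℕ) : ℤ)) *
        (∏ k ∈ Finset.Icc (i + 1) j, (U ^ k - 1)) /
        ∏ k ∈ Finset.Icc 1 ((j - i) / 2), (U ^ (2 * k) - 1))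
    -- m_{ij} = 0 for i ≤ j with j − i odd
    (hm_odd : ∀ i j : ℕ, i ≤ j → (j - i) % 2 = 1 → m i j = 0)
    -- b_{ij} for 0 ≤ i ≤ j with j − i even
    (hb_even : ∀ i j : ℕ, i ≤ j → (j - i) % 2 = 0 →
      b i j = (-ε) ^ ((j - i) / 2) * U ^ ((j - i) / 2) * T ^ (j - i) *
        (∏ k ∈ Finset.Icc (i + 1) j, (U ^ k - 1)) /
        ∏ k ∈ Finset.Icc 1 ((j - i) / 2),
          ((1 - U ^ (2 * i + 1 + 2 * k) * T ^ 2) * (U ^ (2 * k) - 1)))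
    -- b_{ij} = 0 otherwise (i > j, or j − i odd)
    (hb_zero : ∀ i j : ℕ, ¬(i ≤ j ∧ (j - i) % 2 = 0) → b i j = 0) :
    (∀ i : ℕ, b i i = 1) ∧
    (∀ i j : ℕ, i < j →
      b i j = (T ^ j * U ^ (j * (j + 1) / 2) / (U ^ ((j - i) * (j + i + 1) / 2) * T ^ (j - i) - 1)) *
        ∑ k ∈ Finset.Ico i j, m k j * b i k) :=
  b_chip_solves_recursion_general ε U_ne_zero T_ne_zero not_isOfFinOrder_U
    (fun _ _ hn => U_pow_mul_T_pow_ne_one (by positivity)) m b hm_even hm_odd hb_even hb_zero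
end

section
/- Let n ≥ 2 be an even integer and let a, b be nonnegative integers with a + b = n. For s ∈ ℂ define g₂(s) = Γ*_{n/2}((s+1)/2) · Γ*_{n/2}((s−1)/2) / (Γ*_a((s+1)/2) · Γ*_b((s−1)/2)) if n/2 − a is even, and g₂(s) = Γ*_{n/2+1}((s+1)/2) · Γ*_{n/2−1}((s−1)/2) / (Γ*_a((s+1)/2) · Γ*_b((s−1)/2)) if n/2 − a is odd. Then for every s ∈ ℂ such that for every integer j with −1 ≤ j ≤ n + 2 neither (s − j)/2 nor (n + 1 − s − j)/2 is a nonpositive integer (so that no Gamma factor involved vanishes or has a pole), one has g₂(n + 1 − s) = g₂(s). -/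
/-- `Γ*_r(s) = ∏_{j=0}^{r−1} Γ(s − j/2)`, with `Γ*_0(s) = 1`. -/
noncomputable def GammaStar (r : ℕ) (s : ℂ) : ℂ :=
  ∏ j ∈ Finset.range r, Complex.Gamma (s - (j : ℂ) / 2)

/-!
Since `(u - j / 2) + (v - (r - 1 - j) / 2) = 1` whenever `u + v = (r + 1) / 2`, Euler's reflection
formula turns `Γ*_r(u) Γ*_r(v)` into a product of `r` cosecants at `u - j / 2`. Shifting `u` by an
integer changes each cosecant by the same sign, hence leaves the product unchanged for even `r`.
Put `D_{a,b}(s) = Γ*_a((s+1)/2) Γ*_b((s-1)/2)` and `t = n + 1 - s`, where `n` is even. Passing from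
`(a, b + k)` to `(a + k, b)` with `a + b + k = n` multiplies `D(t) / D(s)` by a quotient of two such
products with `r = k`, whose arguments `u` differ by an integer if `k` is even. So
`D_{a,b}(t) / D_{a,b}(s)` with `a + b = n` depends only on the parity of `a`, and `g₂` is a quotient
`D_{p,q} / D_{a,b}` with `p + q = n` and `p ≡ a` mod `2`.
-/

theorem GammaStar_add (r k : ℕ) (s : ℂ) :
    GammaStar (r + k) s = GammaStar r s * GammaStar k (s - r / 2) := by
  simp only [GammaStar, Finset.prod_range_add]
  congr! 3
  push_cast
  ring

theorem GammaStar_ne_zero {r : ℕ} {s : ℂ} (hs : ∀ j < r, ∀ m : ℕ, s - j / 2 ≠ -m) :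
    GammaStar r s ≠ 0 :=
  Finset.prod_ne_zero_iff.2 fun j hj ↦ Complex.Gamma_ne_zero (hs j (Finset.mem_range.1 hj))

theorem GammaStar_mul_GammaStar_eq_prod_pi_div_sin {r : ℕ} {u v : ℂ}
    (huv : u + v = (r + 1) / 2) :
    GammaStar r u * GammaStar r v =
      ∏ j ∈ Finset.range r, (Real.pi : ℂ) / Complex.sin (Real.pi * (u - j / 2)) := by
  rw [GammaStar, GammaStar, ← Finset.prod_range_reflect (fun j : ℕ ↦ Complex.Gamma (v - j / 2)),
    ← Finset.prod_mul_distrib]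
  refine Finset.prod_congr rfl fun j hj ↦ ?_
  have cast_reflect : ((r - 1 - j : ℕ) : ℂ) = r - 1 - j := by
    have hjr := Finset.mem_range.1 hj
    rw [Nat.cast_sub (by omega), Nat.cast_pred (by omega)]
  rw [← Complex.Gamma_mul_Gamma_one_sub, cast_reflect]
  congr 2
  linear_combination huv

theorem GammaStar_add_int_mul_GammaStar_sub_int {r : ℕ} {u v : ℂ}
    (huv : u + v = (r + 1) / 2) (m : ℤ) :
    GammaStar r (u + m) * GammaStar r (v - m) =
      ((-1) ^ m) ^ r * (GammaStar r u * GammaStar r v) := by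
  have sin_shift (j : ℕ) : Complex.sin (Real.pi * (u + m - j / 2)) =
      (-1) ^ m * Complex.sin (Real.pi * (u - j / 2)) := by
    rw [← Int.cast_negOnePow, ← Complex.sin_antiperiodic.add_int_mul_eq m]
    ring_nf
  have huv_shift : (u + m) + (v - m) = (r + 1) / 2 := by linear_combination huv
  have inv_sign : ((-1 : ℂ) ^ m)⁻¹ = (-1) ^ m := by rw [← inv_zpow, inv_neg_one]
  have factor_shift (j : ℕ) : (Real.pi : ℂ) / Complex.sin (Real.pi * (u + m - j / 2)) =
      (-1) ^ m * (Real.pi / Complex.sin (Real.pi * (u - j / 2))) := by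
    rw [sin_shift, div_mul_eq_div_div_swap, div_eq_mul_inv _ ((-1 : ℂ) ^ m), inv_sign, mul_comm]
  rw [GammaStar_mul_GammaStar_eq_prod_pi_div_sin huv_shift,
    GammaStar_mul_GammaStar_eq_prod_pi_div_sin huv]
  simp only [factor_shift, Finset.prod_mul_distrib, Finset.prod_const, Finset.card_range]

/-- The denominator `Γ*_a((s+1)/2) Γ*_b((s-1)/2)` of the Gamma factor of a symmetric matrix of
signature `(a, b)`. The numerators of `g₂` have the same shape, for the signatures
`(n/2, n/2)` and `(n/2 + 1, n/2 - 1)`. -/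
noncomputable def signatureGamma (a b : ℕ) (s : ℂ) : ℂ :=
  GammaStar a ((s + 1) / 2) * GammaStar b ((s - 1) / 2)

theorem signatureGamma_ne_zero {a b : ℕ} {s : ℂ}
    (hs : ∀ j : ℤ, -1 ≤ j → j ≤ a + b → ∀ m : ℤ, m ≤ 0 → (s - j) / 2 ≠ m) :
    signatureGamma a b s ≠ 0 := by
  refine mul_ne_zero (GammaStar_ne_zero fun j hj m hm ↦ ?_)
    (GammaStar_ne_zero fun j hj m hm ↦ ?_)
  · refine hs (j - 1) (by omega) (by omega) (-m) (by omega) ?_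
    push_cast
    linear_combination hm
  · refine hs (j + 1) (by omega) (by omega) (-m) (by omega) ?_
    push_cast
    linear_combination hm

theorem signatureGamma_add_mul_signatureGamma_add {a b k : ℕ} (hab : Even (a + b)) (hk : Even k)
    {s t : ℂ} (hst : s + t = a + b + k + 1) :
    signatureGamma (a + k) b t * signatureGamma a (b + k) s =
      signatureGamma (a + k) b s * signatureGamma a (b + k) t := by
  obtain ⟨m, hm⟩ : Even ((a : ℤ) - b) := by
    rw [Int.even_sub]
    exact_mod_cast Nat.even_add.1 hab
  have m_cast : (a : ℂ) - b = m + m := by exact_mod_cast hm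
  have transferred_factors :
      GammaStar k ((t + 1) / 2 - a / 2) * GammaStar k ((s - 1) / 2 - b / 2) =
        GammaStar k ((s + 1) / 2 - a / 2) * GammaStar k ((t - 1) / 2 - b / 2) := by
    have hsum : ((s + 1) / 2 - a / 2) + ((t - 1) / 2 - b / 2) = ((k : ℂ) + 1) / 2 := by
      linear_combination hst / 2
    have shift := GammaStar_add_int_mul_GammaStar_sub_int hsum (m - 1)
    have sign : ((-1 : ℂ) ^ (m - 1)) ^ k = 1 := by
      rw [← zpow_natCast, zpow_comm, zpow_natCast, hk.neg_one_pow, one_zpow]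
    rw [sign, one_mul] at shift
    have arg_s : (s - 1) / 2 - (b : ℂ) / 2 = (s + 1) / 2 - a / 2 + (m - 1 : ℤ) := by
      push_cast
      linear_combination m_cast / 2
    have arg_t : (t + 1) / 2 - (a : ℂ) / 2 = (t - 1) / 2 - b / 2 - (m - 1 : ℤ) := by
      push_cast
      linear_combination -m_cast / 2
    rw [← shift, mul_comm, arg_s, arg_t]
  simp only [signatureGamma, GammaStar_add]
  linear_combination GammaStar a ((t + 1) / 2) * GammaStar b ((t - 1) / 2) *
    GammaStar a ((s + 1) / 2) * GammaStar b ((s - 1) / 2) * transferred_factors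

theorem signatureGamma_mul_signatureGamma_reflect {a b p q : ℕ} (hab : Even (a + b))
    (hpq : p + q = a + b) (hpa : Even ((p : ℤ) - a)) {s t : ℂ} (hst : s + t = a + b + 1) :
    signatureGamma p q t * signatureGamma a b s =
      signatureGamma p q s * signatureGamma a b t := by
  wlog hap : a ≤ p generalizing a b p q
  · have hap_even : Even ((a : ℤ) - p) := by rwa [← neg_sub, even_neg]
    have hcast : (p : ℂ) + q = a + b := by exact_mod_cast hpq
    linear_combination -this (hpq ▸ hab) hpq.symm hap_even (by rw [hst, hcast]) (by omega)
  obtain ⟨k, rfl⟩ := Nat.exists_eq_add_of_le hap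
  obtain rfl : b = q + k := by omega
  have hk : Even k := by simpa using hpa
  have haq : Even (a + q) := by
    rw [← add_assoc] at hab
    exact (Nat.even_add.1 hab).2 hk
  refine signatureGamma_add_mul_signatureGamma_add haq hk ?_
  rw [hst]
  push_cast
  ring

theorem signatureGamma_div_signatureGamma_reflect {a b p q : ℕ} (hab : Even (a + b))
    (hpq : p + q = a + b) (hpa : Even ((p : ℤ) - a)) {s t : ℂ} (hst : s + t = a + b + 1)
    (hs : signatureGamma a b s ≠ 0) (ht : signatureGamma a b t ≠ 0) :
    signatureGamma p q t / signatureGamma a b t = signatureGamma p q s / signatureGamma a b s :=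
  (div_eq_div_iff ht hs).2 (signatureGamma_mul_signatureGamma_reflect hab hpq hpa hst)

/-- Lemma 3.6, `g₂` part: for even `n = a + b ≥ 2`, the Gamma factor `g₂` satisfies
`g₂(n+1−s) = g₂(s)` whenever no involved Gamma factor vanishes or has a pole. -/
theorem gamma_factor_FE_even_p3 (n : ℕ) (hn : 2 ≤ n) (heven : Even n)
    (a b : ℕ) (hab : a + b = n) (g₂ : ℂ → ℂ)
    (hg_even : Even ((n : ℤ) / 2 - (a : ℤ)) → ∀ s : ℂ, g₂ s =
      GammaStar (n / 2) ((s + 1) / 2) * GammaStar (n / 2) ((s - 1) / 2) /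
        (GammaStar a ((s + 1) / 2) * GammaStar b ((s - 1) / 2)))
    (hg_odd : ¬ Even ((n : ℤ) / 2 - (a : ℤ)) → ∀ s : ℂ, g₂ s =
      GammaStar (n / 2 + 1) ((s + 1) / 2) * GammaStar (n / 2 - 1) ((s - 1) / 2) /
        (GammaStar a ((s + 1) / 2) * GammaStar b ((s - 1) / 2)))
    (s : ℂ)
    (hs : ∀ j : ℤ, -1 ≤ j → j ≤ (n : ℤ) + 2 → ∀ m : ℤ, m ≤ 0 →
      (s - (j : ℂ)) / 2 ≠ (m : ℂ) ∧ ((n : ℂ) + 1 - s - (j : ℂ)) / 2 ≠ (m : ℂ)) :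
    g₂ ((n : ℂ) + 1 - s) = g₂ s := by
  subst hab
  have denominator_ne_zero : signatureGamma a b s ≠ 0 :=
    signatureGamma_ne_zero fun j hj hjn m hm ↦ (hs j hj (by push_cast; omega) m hm).1
  have denominator_reflect_ne_zero : signatureGamma a b ((a + b : ℕ) + 1 - s) ≠ 0 :=
    signatureGamma_ne_zero fun j hj hjn m hm ↦ (hs j hj (by push_cast; omega) m hm).2
  have hst : s + (((a + b : ℕ) : ℂ) + 1 - s) = a + b + 1 := by push_cast; ring
  by_cases hpar : Even (((a + b : ℕ) : ℤ) / 2 - (a : ℤ))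
  · rw [hg_even hpar, hg_even hpar]
    exact signatureGamma_div_signatureGamma_reflect heven (by grind) (by exact_mod_cast hpar) hst
      denominator_ne_zero denominator_reflect_ne_zero
  · have hpar_succ : Even ((((a + b) / 2 + 1 : ℕ) : ℤ) - a) := by grind
    rw [hg_odd hpar, hg_odd hpar]
    exact signatureGamma_div_signatureGamma_reflect heven (by grind) hpar_succ hst
      denominator_ne_zero denominator_reflect_ne_zero
end
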